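/- arXiv:2505.02775 — 4 statements merged into one kernel-verified Lean document; each statement's English description precedes it below -/
import Mathlib

section
/- Let R be a ring and M an R-module of finite length, and let S be a simple R-module occurring with multiplicity one in M. Then there exists a pair of submodules W ≤ X of M with X/W isomorphic to S such that for every pair of submodules W' ≤ X' of M with X'/W' isomorphic to S one has X' ≤ X, W' ≤ W, X' ⊔ W = X and X' ⊓ W = W' (so the inclusion X' ≤ X induces an isomorphism X'/W' ≅ X/W). Moreover the pair (W, X) with this property is unique. -/
/-- The simple module `S` occurs with multiplicity one in the finite-length module `M`:
there is a composition series of `M` going from `⊥` to `⊤` in which exactly one of the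
simple factors is isomorphic to `S`. -/
def OccursWithMultiplicityOne (R : Type*) [Ring R] (M : Type*) [AddCommGroup M] [Module R M]
    (S : Type*) [AddCommGroup S] [Module R S] : Prop :=
  ∃ s : CompositionSeries (Submodule R M), s.head = ⊥ ∧ s.last = ⊤ ∧
    ∃! i : Fin s.length,
      Nonempty ((↥(s i.succ) ⧸ Submodule.comap (s i.succ).subtype (s i.castSucc)) ≃ₗ[R] S)

section MultOneAux

variable {R : Type*} [Ring R] {M : Type*} [AddCommGroup M] [Module R M]

def MPair (S : Type*) [AddCommGroup S] [Module R S] (W X : Submodule R M) : Prop :=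
  W ≤ X ∧ Nonempty ((↥X ⧸ Submodule.comap X.subtype W) ≃ₗ[R] S)

variable {S : Type*} [AddCommGroup S] [Module R S]

theorem MPair.up {A B : Submodule R M} (h : MPair S (A ⊓ B) A) : MPair S B (A ⊔ B) := by
  obtain ⟨_, ⟨e⟩⟩ := h
  exact ⟨le_sup_right, ⟨(LinearMap.quotientInfEquivSupQuotient A B).symm.trans e⟩⟩

theorem MPair.down {A B : Submodule R M} (h : MPair S B (A ⊔ B)) : MPair S (A ⊓ B) A := by
  obtain ⟨_, ⟨e⟩⟩ := h
  exact ⟨inf_le_left, ⟨(LinearMap.quotientInfEquivSupQuotient A B).trans e⟩⟩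

variable [IsSimpleModule R S]

theorem MPair.covBy {W X : Submodule R M} (h : MPair S W X) : W ⋖ X := by
  obtain ⟨h, ⟨e⟩⟩ := h
  rw [covBy_iff_quot_is_simple h]
  exact IsSimpleModule.congr e

theorem cov_cases {W X Y : Submodule R M} (h : W ⋖ X) (h1 : W ≤ Y) (h2 : Y ≤ X) :
    Y = W ∨ Y = X := by
  exact (h.wcovBy.eq_or_eq h1 h2)

theorem cov_sup {W X A : Submodule R M} (h : W ⋖ X) (h2 : A ≤ X) (h1 : ¬ A ≤ W) :
    A ⊔ W = X := by
  rcases cov_cases h (le_sup_right : W ≤ A ⊔ W) (sup_le h2 h.le) with h3 | h3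
  · exact absurd (h3 ▸ le_sup_left) h1
  · exact h3

theorem MPair.sup {W X A : Submodule R M} (h : MPair S W X) (hA : X ⊓ A ≤ W) :
    MPair S (W ⊔ A) (X ⊔ A) := by
  have h1 : X ⊓ (W ⊔ A) = W := by
    rw [inf_comm, sup_inf_assoc_of_le A h.1, inf_comm]
    exact sup_eq_left.2 hA
  have h2 : X ⊔ (W ⊔ A) = X ⊔ A := by rw [← sup_assoc, sup_eq_left.2 h.1]
  rw [← h2]
  apply MPair.up
  rwa [h1]

theorem MPair.inf {W X A : Submodule R M} (h : MPair S W X) (hA : ¬ X ⊓ A ≤ W) :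
    MPair S (W ⊓ A) (X ⊓ A) := by
  have h1 := cov_sup h.covBy inf_le_left hA
  have h2 : (X ⊓ A) ⊓ W = W ⊓ A := by
    rw [inf_right_comm, inf_eq_right.2 h.1]
  rw [← h2]
  apply MPair.down
  rwa [h1]

theorem index_of_pair (s : CompositionSeries (Submodule R M)) (h0 : s.head = ⊥)
    (h1 : s.last = ⊤) {W X : Submodule R M} (h : MPair S W X) :
    ∃ i : Fin s.length, s i.castSucc ⊓ X ≤ W ∧ ¬ s i.succ ⊓ X ≤ W ∧
      MPair S (s i.castSucc) (s i.succ) := by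
  have : ∃ i : Fin s.length, s i.castSucc ⊓ X ≤ W ∧ ¬ s i.succ ⊓ X ≤ W := by
    by_contra! hc
    have hall : ∀ i : Fin (s.length + 1), s i ⊓ X ≤ W := by
      intro i
      induction i using Fin.induction with
      | zero =>
        have : s 0 = ⊥ := h0
        rw [this]; simp
      | succ i ih => exact hc i ih
    have h2 := hall (Fin.last _)
    have h3 : s (Fin.last _) = ⊤ := h1
    rw [h3, top_inf_eq] at h2
    exact h.covBy.lt.not_ge h2
  obtain ⟨i, hi, hi'⟩ := this
  refine ⟨i, hi, hi', ?_⟩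
  have hc : s i.castSucc ⋖ s i.succ := s.step i
  have hp : MPair S (W ⊓ s i.succ) (X ⊓ s i.succ) := h.inf (by rwa [inf_comm])
  have hn : ¬ X ⊓ s i.succ ≤ s i.castSucc := fun hle =>
    hi' (le_trans (le_inf ((inf_comm _ _).trans_le hle) inf_le_right) hi)
  have hs := cov_sup hc inf_le_right hn
  have hle : (X ⊓ s i.succ) ⊓ s i.castSucc ≤ W ⊓ s i.succ :=
    le_inf (le_trans (le_inf inf_le_right (inf_le_left.trans inf_le_left)) hi)
      (inf_le_left.trans inf_le_right)
  have := hp.sup hle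
  rw [hs] at this
  -- the lower term lies between the two members of a covering pair and is not the top one
  rcases cov_cases hc le_sup_right this.1 with h4 | h4
  · rwa [h4] at this
  · exact absurd h4 this.covBy.lt.ne

theorem no_chain (hmult : OccursWithMultiplicityOne R M S) {W X W' X' : Submodule R M}
    (h : MPair S W X) (h' : MPair S W' X') (hXW : X ≤ W') : False := by
  obtain ⟨s, h0, h1, j, -, hj⟩ := hmult
  obtain ⟨i, hi1, hi2, hi3⟩ := index_of_pair s h0 h1 h
  obtain ⟨k, hk1, hk2, hk3⟩ := index_of_pair s h0 h1 h'
  have hik : k = i := (hj k hk3.2).trans (hj i hi3.2).symm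
  subst hik
  have hn : ¬ s k.succ ⊓ W' ≤ s k.castSucc := fun hle =>
    hi2 (le_trans (le_inf (le_trans (inf_le_inf_left _ hXW) hle) inf_le_right) hi1)
  have hs := cov_sup hk3.covBy inf_le_left hn
  apply hk2
  rw [← hs, sup_inf_assoc_of_le _ (inf_le_right.trans h'.1)]
  exact sup_le inf_le_right hk1

theorem pair_under_sup {A B W X : Submodule R M} (h : MPair S W X) (hX : X ≤ A ⊔ B) :
    ∃ W' X' : Submodule R M, MPair S W' X' ∧ (X' ≤ A ∨ X' ≤ B) := by
  by_cases hA : X ⊓ A ≤ W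
  · have h1 := h.sup hA
    by_cases hB : (X ⊔ A) ⊓ B ≤ W ⊔ A
    · have h2 := (h1.sup hB).covBy.lt
      exfalso
      apply h2.not_ge
      rw [sup_assoc, sup_assoc]
      exact sup_le (hX.trans le_sup_right) le_sup_right
    · exact ⟨_, _, h1.inf hB, Or.inr inf_le_right⟩
  · exact ⟨_, _, h.inf hA, Or.inl inf_le_right⟩

theorem join_aux (hmult : OccursWithMultiplicityOne R M S) {W X W' X' : Submodule R M}
    (h : MPair S W X) (h' : MPair S W' X') : X ⊓ (W ⊔ W') ≤ W := by
  by_contra hc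
  obtain ⟨_, _, hp, h1 | h1⟩ := pair_under_sup (h.inf hc) inf_le_right
  · exact no_chain hmult hp h h1
  · exact no_chain hmult hp h' h1

theorem join_pair (hmult : OccursWithMultiplicityOne R M S) {W X W' X' : Submodule R M}
    (h : MPair S W X) (h' : MPair S W' X') : MPair S (W ⊔ W') (X ⊔ X') := by
  have h1 := h.sup (join_aux hmult h h')
  have h2 := h'.sup (join_aux hmult h' h)
  rw [← sup_assoc, sup_idem] at h1
  rw [← sup_assoc, sup_idem, sup_comm W' W] at h2
  have key : X ⊔ (W ⊔ W') = X' ⊔ (W ⊔ W') := by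
    by_contra hne
    by_cases hle : (X ⊔ (W ⊔ W')) ⊓ (X' ⊔ (W ⊔ W')) ≤ W ⊔ W'
    · have h3 := h1.sup hle
      rw [sup_eq_right.2 h2.1] at h3
      exact no_chain hmult h2 h3 le_rfl
    · have a := cov_sup h1.covBy inf_le_left hle
      have b := cov_sup h2.covBy inf_le_right hle
      exact hne (a.symm.trans b)
  have : X ⊔ (W ⊔ W') = X ⊔ X' := by
    apply le_antisymm
    · exact sup_le le_sup_left (sup_le_sup h.1 h'.1)
    · refine sup_le le_sup_left ?_
      rw [key]; exact le_sup_left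
  rwa [this] at h1

end MultOneAux

/-- If `S` is a simple module occurring with multiplicity one in the finite-length module `M`,
then there is a unique pair of submodules `W ≤ X` of `M` with `X/W ≅ S` such that every pair
`W' ≤ X'` with `X'/W' ≅ S` satisfies `X' ≤ X`, `W' ≤ W`, `X' ⊔ W = X` and `X' ⊓ W = W'`. -/
theorem multiplicity_one_pair (R : Type*) [Ring R] (M : Type*) [AddCommGroup M] [Module R M]
    (S : Type*) [AddCommGroup S] [Module R S] [IsSimpleModule R S]
    (hfl : IsFiniteLength R M)
    (hmult : OccursWithMultiplicityOne R M S) :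
    ∃! p : Submodule R M × Submodule R M,
      (p.1 ≤ p.2 ∧ Nonempty ((↥p.2 ⧸ Submodule.comap p.2.subtype p.1) ≃ₗ[R] S)) ∧
      ∀ W' X' : Submodule R M, W' ≤ X' →
        Nonempty ((↥X' ⧸ Submodule.comap X'.subtype W') ≃ₗ[R] S) →
        X' ≤ p.2 ∧ W' ≤ p.1 ∧ X' ⊔ p.1 = p.2 ∧ X' ⊓ p.1 = W' := by
  have : IsNoetherian R M := (isFiniteLength_iff_isNoetherian_isArtinian.1 hfl).1
  have hne : {W : Submodule R M | ∃ X, MPair S W X}.Nonempty := by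
    obtain ⟨s, -, -, i, hi, -⟩ := hmult
    exact ⟨s i.castSucc, s i.succ, (s.step i : s i.castSucc ⋖ s i.succ).le, hi⟩
  obtain ⟨W, ⟨X, hWX⟩, hmax⟩ := set_has_maximal_iff_noetherian.2 this _ hne
  refine ⟨(W, X), ⟨hWX, ?_⟩, ?_⟩
  · intro W' X' hle hiso
    have h' : MPair S W' X' := ⟨hle, hiso⟩
    have hj := join_pair hmult h' hWX
    have hW : W' ⊔ W = W := by
      have h1 : W ≤ W' ⊔ W := le_sup_right
      by_contra hne
      exact hmax _ ⟨_, hj⟩ (lt_of_le_of_ne h1 (Ne.symm hne))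
    have hW' : W' ≤ W := sup_eq_right.1 hW
    rw [hW] at hj
    have hX : X = X' ⊔ X := by
      rcases cov_cases hj.covBy hWX.1 le_sup_right with h | h
      · exact absurd h.symm hWX.covBy.lt.ne
      · exact h
    have hX' : X' ≤ X := by rw [hX]; exact le_sup_left
    refine ⟨hX', hW', ?_, ?_⟩
    · exact cov_sup hWX.covBy hX' (fun h => no_chain hmult h' hWX h)
    · have := join_aux hmult h' hWX
      rw [hW] at this
      exact le_antisymm this (le_inf hle hW')
  · rintro ⟨W', X'⟩ ⟨⟨hle, hiso⟩, hall⟩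
    have hj := join_pair hmult ⟨hle, hiso⟩ hWX
    obtain ⟨a, b, c, d⟩ := hall W X hWX.1 hWX.2
    dsimp only at a b c d hle hiso
    have hW : W = W' := by
      by_contra hne
      exact hmax _ ⟨X', hle, hiso⟩ (lt_of_le_of_ne b hne)
    subst hW
    rw [sup_eq_left.2 hWX.1] at c
    rw [c]
end

section
/- One has h·s·h⁻¹ = ζ⁻¹·s. Moreover, if x ∈ GL_n(ℂ) and z ∈ ℂ^× satisfy x·s·x⁻¹ = z·s, then there exists k ∈ {0, …, d−1} such that z = ζ^k and h^k·x commutes with s (i.e., x lies in the coset h^{−k}·Z(s) of the centralizer Z(s) of s). Consequently the quotient of {x ∈ GL_n(ℂ) : x s x⁻¹ ∈ ℂ^×·s} by the centralizer of s is cyclic of order d, generated by the class of h. -/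
/-- The diagonal matrix `s = diag(I_m, ζ·I_m, …, ζ^{d−1}·I_m)`, with entry `ζ^i` at each
index `(i,a)` (the block index `i` being viewed cyclically, i.e. in `ℤ/d`). -/
noncomputable def sMat (d m : ℕ) (ζ : ℂ) : Matrix (ZMod d × Fin m) (ZMod d × Fin m) ℂ :=
  Matrix.diagonal fun p => ζ ^ p.1.val

/-- The permutation matrix `h` of the index permutation `(i,a) ↦ (i+1,a)` (block cyclic
shift). -/
noncomputable def hMat (d m : ℕ) [NeZero d] : Matrix (ZMod d × Fin m) (ZMod d × Fin m) ℂ :=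
  Matrix.of fun p q => if p.1 = q.1 + 1 ∧ p.2 = q.2 then 1 else 0

lemma zeta_val_add_one (d : ℕ) [NeZero d] (ζ : ℂ) (hζ : IsPrimitiveRoot ζ d) (a : ZMod d) :
    ζ ^ (a + 1).val = ζ * ζ ^ a.val := by
  have h1 : (((a + 1).val : ℕ) : ZMod d) = ((a.val + 1 : ℕ) : ZMod d) := by
    push_cast
    simp
  have h2 := (ZMod.natCast_eq_natCast_iff _ _ _).1 h1
  rw [← pow_succ']
  have h3 : (a + 1).val % d = (a.val + 1) % d := h2
  rw [← pow_mod_orderOf ζ (a + 1).val, ← pow_mod_orderOf ζ (a.val + 1), ← hζ.eq_orderOf, h3]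

lemma hMat_mul_sMat (d m : ℕ) [NeZero d] (ζ : ℂ) (hζ : IsPrimitiveRoot ζ d) :
    hMat d m * sMat d m ζ = ζ⁻¹ • (sMat d m ζ * hMat d m) := by
  have h0 : ζ ≠ 0 := hζ.ne_zero (NeZero.ne d)
  ext p q
  simp only [sMat, Matrix.mul_diagonal, Matrix.smul_apply, Matrix.diagonal_mul, hMat,
    Matrix.of_apply, smul_eq_mul]
  split_ifs with h
  · rw [h.1, zeta_val_add_one d ζ hζ]
    field_simp
  · simp

lemma hMat_mul_transpose (d m : ℕ) [NeZero d] :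
    hMat d m * (hMat d m).transpose = 1 := by
  ext p q
  rw [Matrix.mul_apply, Finset.sum_eq_single (p.1 - 1, p.2)]
  · rcases p with ⟨p1, p2⟩
    rcases q with ⟨q1, q2⟩
    simp [hMat, Matrix.one_apply, eq_comm]
  · rintro ⟨b1, b2⟩ _ hb
    have : ¬ (p.1 = b1 + 1 ∧ p.2 = b2) := by
      rintro ⟨h1, h2⟩
      apply hb
      rw [h1, h2]
      simp
    simp [hMat, this]
  · simp

lemma hMat_pow_mul_sMat (d m : ℕ) [NeZero d] (ζ : ℂ) (hζ : IsPrimitiveRoot ζ d) (k : ℕ) :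
    hMat d m ^ k * sMat d m ζ = (ζ⁻¹) ^ k • (sMat d m ζ * hMat d m ^ k) := by
  induction k with
  | zero => simp
  | succ k ih =>
    rw [pow_succ, mul_assoc, hMat_mul_sMat d m ζ hζ, mul_smul_comm, ← mul_assoc, ih,
      smul_mul_assoc, smul_smul, mul_assoc, pow_succ' ζ⁻¹]

/-- One has `h·s·h⁻¹ = ζ⁻¹·s`; and if an invertible matrix `x` and `z ∈ ℂˣ` satisfy
`x·s·x⁻¹ = z·s`, then `z = ζ^k` for some `0 ≤ k < d` and `h^k·x` commutes with `s`,
i.e. `x` lies in the coset `h^{−k}·Z(s)` of the centralizer of `s`. -/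
theorem conjugation_sMat (d m : ℕ) [NeZero d] (hm : 1 ≤ m)
    (ζ : ℂ) (hζ : IsPrimitiveRoot ζ d) :
    hMat d m * sMat d m ζ * (hMat d m)⁻¹ = ζ⁻¹ • sMat d m ζ ∧
    ∀ x : Matrix (ZMod d × Fin m) (ZMod d × Fin m) ℂ, IsUnit x →
      ∀ z : ℂ, z ≠ 0 → x * sMat d m ζ * x⁻¹ = z • sMat d m ζ →
        ∃ k : ℕ, k < d ∧ z = ζ ^ k ∧
          (hMat d m ^ k * x) * sMat d m ζ = sMat d m ζ * (hMat d m ^ k * x) := by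
  have h0 : ζ ≠ 0 := hζ.ne_zero (NeZero.ne d)
  refine ⟨?_, ?_⟩
  · rw [Matrix.inv_eq_right_inv (hMat_mul_transpose d m), hMat_mul_sMat d m ζ hζ,
      smul_mul_assoc, mul_assoc, hMat_mul_transpose, mul_one]
  · intro x hx z hz h
    have hdet : IsUnit x.det := (Matrix.isUnit_iff_isUnit_det x).1 hx
    have hxs : x * sMat d m ζ = z • (sMat d m ζ * x) := by
      rw [← smul_mul_assoc, ← h, mul_assoc, Matrix.nonsing_inv_mul x hdet, mul_one]
    have hrow : ∃ q, x ((0 : ZMod d), (⟨0, hm⟩ : Fin m)) q ≠ 0 := by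
      by_contra! hc
      have h1 := congrFun (congrFun (Matrix.mul_nonsing_inv x hdet)
        ((0 : ZMod d), (⟨0, hm⟩ : Fin m))) ((0 : ZMod d), (⟨0, hm⟩ : Fin m))
      rw [Matrix.mul_apply] at h1
      simp [hc] at h1
    obtain ⟨q, hq⟩ := hrow
    have hzk : z = ζ ^ q.1.val := by
      have h1 := congrFun (congrFun hxs ((0 : ZMod d), (⟨0, hm⟩ : Fin m))) q
      simp only [sMat, Matrix.mul_diagonal, Matrix.smul_apply, Matrix.diagonal_mul,
        smul_eq_mul, ZMod.val_zero, pow_zero, one_mul] at h1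
      rw [mul_comm] at h1
      exact (mul_right_cancel₀ hq h1).symm
    refine ⟨q.1.val, ZMod.val_lt _, hzk, ?_⟩
    rw [mul_assoc, hxs, mul_smul_comm, ← mul_assoc, hMat_pow_mul_sMat d m ζ hζ,
      smul_mul_assoc, smul_smul, hzk, ← mul_pow, mul_inv_cancel₀ h0, one_pow, one_smul, mul_assoc]
end

section
/- With F, K, τ, r, s, A = K^r and σ as given, set d = rs. For every x ∈ A and every index j ∈ Fin r, the j-th coordinate of the product ∏_{i=0}^{d−1} σ^i(x) equals the image in K of N_{K/F}(x_0·x_1·⋯·x_{r−1}), where N_{K/F} denotes the field norm (Algebra.norm). In particular all coordinates of this product are equal and lie in F, and the subgroup {(∏_{i=0}^{d−1} σ^i(x))_0 : x a unit of A} of F^× equals N_{K/F}(K^×). -/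
/-- The cyclic shift-with-twist map `σ` on `A = K^r`: `(σx)_0 = τ(x_{r−1})` and
`(σx)_i = x_{i−1}` for `1 ≤ i ≤ r−1` (here `i - 1` is cyclic subtraction in `Fin r`). -/
def cycShift (K : Type*) (r : ℕ) [NeZero r] (τ : K → K) :
    (Fin r → K) → (Fin r → K) :=
  fun x i => if i = 0 then τ (x (i - 1)) else x (i - 1)

theorem cycShift_iter {K : Type*} (r : ℕ) [NeZero r] (τ : K → K) (x : Fin r → K) (i : ℕ) :
    i ≤ r → ∀ j : Fin r, (cycShift K r τ)^[i] x j =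
      if j.val < i then τ (x (j - Fin.ofNat r i)) else x (j - Fin.ofNat r i) := by
  have hr : 0 < r := Nat.pos_of_ne_zero (NeZero.ne r)
  induction i with
  | zero =>
    intro _ j
    have h0 : Fin.ofNat r 0 = 0 := by ext; simp
    rw [h0]; simp
  | succ i ih =>
    intro hi j
    have ih := ih (by omega) (j - 1)
    have hc : j - 1 - Fin.ofNat r i = j - Fin.ofNat r (i + 1) := by
      have : Fin.ofNat r (i + 1) = 1 + Fin.ofNat r i := by
        ext; simp [Fin.val_add, Nat.add_comm]
      rw [this]; exact sub_sub j 1 _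
    rw [hc] at ih
    rw [Function.iterate_succ_apply']
    change (if j = 0 then τ ((cycShift K r τ)^[i] x (j - 1)) else (cycShift K r τ)^[i] x (j - 1)) = _
    rw [ih]
    by_cases hj : j = 0
    · have hv : ¬ (j - 1).val < i := by
        subst hj
        rcases Nat.lt_or_ge 1 r with h | h
        · have h1 : (1 : Fin r).val = 1 := by
            rw [Fin.coe_ofNat_eq_mod, Nat.mod_eq_of_lt h]
          simp only [Fin.sub_def, h1, Fin.val_zero]
          rw [Nat.mod_eq_of_lt (by omega)]; omega
        · omega
      rw [if_pos hj, if_neg hv, if_pos (by rw [hj]; simp)]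
    · have hv : (j - 1).val = j.val - 1 := by
        have hj' : j.val ≠ 0 := fun h => hj (Fin.ext (by simpa using h))
        have hlt := j.isLt
        have h1 : (1 : Fin r).val = 1 := by
          rw [Fin.coe_ofNat_eq_mod, Nat.mod_eq_of_lt (by omega)]
        simp only [Fin.sub_def, h1]
        rw [show r - 1 + j.val = (j.val - 1) + r by omega, Nat.add_mod_right,
          Nat.mod_eq_of_lt (by omega)]
      have hj' : j.val ≠ 0 := fun h => hj (Fin.ext (by simpa using h))
      rw [if_neg hj, hv]
      have : (j.val - 1 < i) ↔ j.val < i + 1 := by omega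
      simp only [this]

theorem cycShift_iter_r {K : Type*} (r : ℕ) [NeZero r] (τ : K → K) (x : Fin r → K) :
    (cycShift K r τ)^[r] x = fun j => τ (x j) := by
  funext j
  rw [cycShift_iter r τ x r le_rfl j, if_pos j.isLt]
  have : Fin.ofNat r r = 0 := by ext; simp
  rw [this, sub_zero]

theorem cycShift_iter_mul {K : Type*} (r : ℕ) [NeZero r] (τ : K → K) (x : Fin r → K) (k : ℕ) :
    (cycShift K r τ)^[r * k] x = fun j => τ^[k] (x j) := by
  induction k with
  | zero => simp
  | succ k ih =>
    rw [Nat.mul_succ, Nat.add_comm, Function.iterate_add_apply, ih, cycShift_iter_r]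
    funext j
    rw [Function.iterate_succ_apply']

theorem prod_range_mul_aux {M : Type*} [CommMonoid M] (f : ℕ → M) (r s : ℕ) :
    ∏ i ∈ Finset.range (r * s), f i =
      ∏ k ∈ Finset.range s, ∏ i ∈ Finset.range r, f (r * k + i) := by
  induction s with
  | zero => simp
  | succ s ih => rw [Nat.mul_succ, Finset.prod_range_add, ih, Finset.prod_range_succ]

theorem norm_cyclic_aux (F K : Type*) [Field F] [Field K] [Algebra F K]
    [FiniteDimensional F K] [IsGalois F K]
    (τ : K ≃ₐ[F] K) (hτ : ∀ g : K ≃ₐ[F] K, g ∈ Subgroup.zpowers τ) (y : K) :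
    ∏ k ∈ Finset.range (Module.finrank F K), (⇑τ)^[k] y = algebraMap F K (Algebra.norm F y) := by
  classical
  rw [Algebra.norm_eq_prod_automorphisms, ← IsGalois.card_aut_eq_finrank,
    ← orderOf_eq_card_of_forall_mem_zpowers hτ, ← IsCyclic.image_range_orderOf hτ,
    Finset.prod_image]
  · refine Finset.prod_congr rfl fun k _ => ?_
    exact (congrFun (AlgEquiv.coe_pow τ k) y).symm
  · intro a ha b hb h
    exact pow_injOn_Iio_orderOf (by simpa using ha) (by simpa using hb) h

theorem cyclic_first (F K : Type*) [Field F] [Field K] [Algebra F K]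
    [FiniteDimensional F K] [IsGalois F K]
    (τ : K ≃ₐ[F] K) (hτ : ∀ g : K ≃ₐ[F] K, g ∈ Subgroup.zpowers τ)
    (r : ℕ) [NeZero r] (x : Fin r → K) (j : Fin r) :
    (∏ i ∈ Finset.range (r * Module.finrank F K), (cycShift K r ⇑τ)^[i] x) j =
      algebraMap F K (Algebra.norm F (∏ i : Fin r, x i)) := by
  have hQ : (∏ i ∈ Finset.range (r * Module.finrank F K), (cycShift K r ⇑τ)^[i] x) j =
      ∏ k ∈ Finset.range (Module.finrank F K),
        (⇑τ)^[k] (∏ i ∈ Finset.range r, (cycShift K r ⇑τ)^[i] x j) := by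
    rw [prod_range_mul_aux, Finset.prod_apply]
    refine Finset.prod_congr rfl fun k _ => ?_
    rw [Finset.prod_apply]
    have hp : ∀ k : ℕ, ∀ f : ℕ → K, (⇑τ)^[k] (∏ i ∈ Finset.range r, f i) =
        ∏ i ∈ Finset.range r, (⇑τ)^[k] (f i) := by
      intro k f
      induction k with
      | zero => simp
      | succ k ih => simp only [Function.iterate_succ_apply', ih, map_prod]
    rw [hp]
    refine Finset.prod_congr rfl fun i _ => ?_
    rw [Function.iterate_add_apply, cycShift_iter_mul]
  rw [hQ, norm_cyclic_aux F K τ hτ]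
  congr 1
  rw [map_prod, map_prod]
  have hτn : ∀ y : K, Algebra.norm F (τ y) = Algebra.norm F y := fun y =>
    Algebra.norm_eq_of_algEquiv τ y
  have : ∀ i ∈ Finset.range r, Algebra.norm F ((cycShift K r ⇑τ)^[i] x j) =
      Algebra.norm F (x (j - Fin.ofNat r i)) := by
    intro i hi
    rw [cycShift_iter r τ x i (Finset.mem_range.1 hi).le j]
    split_ifs
    · exact hτn _
    · rfl
  rw [Finset.prod_congr rfl this,
    ← Fin.prod_univ_eq_prod_range (fun i => Algebra.norm F (x (j - Fin.ofNat r i))) r]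
  refine Fintype.prod_equiv (Equiv.subLeft j) _ _ fun i => ?_
  have : Fin.ofNat r i.val = i := by ext; simp [Nat.mod_eq_of_lt i.isLt]
  simp [this]

/-- Let `K/F` be a finite Galois extension of degree `s` with cyclic Galois group generated
by `τ`, let `A = K^r` with the cyclic `F`-algebra automorphism `σ` above, and set `d = rs`.
For every `x ∈ A` and every coordinate `j`, the `j`-th coordinate of `∏_{i=0}^{d−1} σ^i(x)`
equals the image in `K` of `N_{K/F}(x_0·x_1·⋯·x_{r−1})`; and the set of values
`(∏_{i=0}^{d−1} σ^i(x))_0` for `x` a unit of `A` equals `N_{K/F}(K^×)`. -/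
theorem cyclic_algebra_norm (F K : Type*) [Field F] [Field K] [Algebra F K]
    [FiniteDimensional F K] [IsGalois F K]
    (s : ℕ) (hs : Module.finrank F K = s) (hs1 : 1 ≤ s)
    (τ : K ≃ₐ[F] K) (hτ : ∀ g : K ≃ₐ[F] K, g ∈ Subgroup.zpowers τ)
    (r : ℕ) [NeZero r] (hr : 1 ≤ r) :
    (∀ x : Fin r → K, ∀ j : Fin r,
        (∏ i ∈ Finset.range (r * s), (cycShift K r ⇑τ)^[i] x) j =
          algebraMap F K (Algebra.norm F (∏ i : Fin r, x i))) ∧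
    {z : K | ∃ x : Fin r → K, (∀ i, x i ≠ 0) ∧
        (∏ i ∈ Finset.range (r * s), (cycShift K r ⇑τ)^[i] x) 0 = z} =
      {z : K | ∃ y : K, y ≠ 0 ∧ algebraMap F K (Algebra.norm F y) = z} := by
  subst hs
  have h1 := cyclic_first F K τ hτ r
  refine ⟨h1, ?_⟩
  ext z
  constructor
  · rintro ⟨x, hx, rfl⟩
    exact ⟨∏ i, x i, Finset.prod_ne_zero_iff.2 fun i _ => hx i, (h1 x 0).symm⟩
  · rintro ⟨y, hy, rfl⟩
    refine ⟨fun i => if i = 0 then y else 1, fun i => ?_, ?_⟩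
    · dsimp only
      split_ifs
      · exact hy
      · exact one_ne_zero
    · rw [h1]
      simp
end

section
/- With F, K, τ, r, s, A = K^r and σ as given, set d = rs. Then σ^d is the identity, d is the exact order of σ, and an element x ∈ A satisfies σ(x) = x if and only if all coordinates of x are equal to a single element of F; that is, the fixed points of σ in A are exactly the diagonal image of F. -/
theorem cycShift_iter_s12 (K : Type*) [Field K] (F : Type*) [Field F] [Algebra F K] (τ : K ≃ₐ[F] K)
    (r : ℕ) [NeZero r] (x : Fin r → K) (j : Fin r) (n : ℕ) :
    (cycShift K r ⇑τ)^[n] x (Fin.ofNat r (j + n)) = (τ ^ ((j + n : ℕ) / r)) (x j) := by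
  induction n with
  | zero => simp [Nat.div_eq_of_lt j.2]
  | succ n ih =>
    rw [Function.iterate_succ_apply']
    have h1 : Fin.ofNat r (j + (n + 1)) - 1 = Fin.ofNat r (j + n) := by
      rw [sub_eq_iff_eq_add]
      ext
      simp [Fin.val_add, ← add_assoc]
    have h0 : Fin.ofNat r (j + (n + 1)) = 0 ↔ r ∣ (j + n : ℕ) + 1 := by
      rw [Fin.ext_iff, Nat.dvd_iff_mod_eq_zero]
      simp [add_assoc]
    unfold cycShift at ih ⊢
    simp only [h1, h0]
    rw [ih, ← add_assoc, Nat.succ_div]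
    split_ifs with h
    · rw [pow_succ']; rfl
    · rfl

/-- Let `K/F` be a finite Galois extension of degree `s` with cyclic Galois group generated
by `τ`, let `A = K^r` with the cyclic `F`-algebra automorphism `σ` above, and set `d = rs`.
Then `σ^d = id`, `d` is the exact order of `σ`, and the fixed points of `σ` in `A` are
exactly the diagonal image of `F`. -/
theorem cyclic_algebra_order_and_fixed_points (F K : Type*) [Field F] [Field K] [Algebra F K]
    [FiniteDimensional F K] [IsGalois F K]
    (s : ℕ) (hs : Module.finrank F K = s) (hs1 : 1 ≤ s)
    (τ : K ≃ₐ[F] K) (hτ : ∀ g : K ≃ₐ[F] K, g ∈ Subgroup.zpowers τ)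
    (r : ℕ) [NeZero r] (hr : 1 ≤ r) :
    (cycShift K r ⇑τ)^[r * s] = id ∧
    (∀ e : ℕ, 0 < e → e < r * s → (cycShift K r ⇑τ)^[e] ≠ id) ∧
    (∀ x : Fin r → K, cycShift K r ⇑τ x = x ↔ ∃ c : F, x = fun _ => algebraMap F K c) := by
  have hr0 : 0 < r := hr
  have hord : orderOf τ = s := by
    rw [orderOf_eq_card_of_forall_mem_zpowers hτ, IsGalois.card_aut_eq_finrank, hs]
  refine ⟨?_, ?_, ?_⟩
  · funext x
    funext j
    have h := cycShift_iter_s12 K F τ r x j (r * s)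
    have h1 : Fin.ofNat r (j + r * s) = j := by
      ext
      simp [Nat.mod_eq_of_lt j.2]
    have h2 : ((j : ℕ) + r * s) / r = s := by
      rw [Nat.add_mul_div_left _ _ hr0, Nat.div_eq_of_lt j.2, zero_add]
    rw [h1, h2, ← hord, pow_orderOf_eq_one] at h
    simpa [hord] using h
  · intro e he hlt hid
    have h := fun x : Fin r → K => cycShift_iter_s12 K F τ r x 0 e
    simp only [hid, id, Fin.val_zero, zero_add] at h
    have hz : Fin.ofNat r e = 0 := by
      by_contra hne
      have := h (Pi.single 0 1)
      rw [Pi.single_eq_of_ne hne, Pi.single_eq_same, map_one] at this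
      exact zero_ne_one this
    have hdvd : r ∣ e := by
      rw [Fin.ext_iff] at hz
      exact Nat.dvd_of_mod_eq_zero (by simpa using hz)
    have h1 : τ ^ (e / r) = 1 := by
      ext y
      exact (h fun _ => y).symm
    have h2 := orderOf_dvd_of_pow_eq_one h1
    rw [hord] at h2
    obtain ⟨q, rfl⟩ := hdvd
    rw [Nat.mul_div_cancel_left _ hr0] at h2
    have hq : 0 < q := Nat.pos_of_mul_pos_left he
    have := Nat.le_of_dvd hq h2
    exact absurd (Nat.mul_le_mul_left r this) (not_le.mpr hlt)
  · intro x
    constructor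
    · intro hx
      have h := fun n : ℕ => cycShift_iter_s12 K F τ r x 0 n
      have hfix : ∀ n : ℕ, (cycShift K r ⇑τ)^[n] x = x := fun n => Function.iterate_fixed hx n
      simp only [hfix, Fin.val_zero, zero_add] at h
      have h1 : x 0 = τ (x 0) := by
        have := h r
        rw [Nat.div_self hr0, pow_one] at this
        rw [← this]
        congr 1
        ext
        simp
      have h2 : ∀ i, x i = x 0 := by
        intro i
        have := h i
        rw [Nat.div_eq_of_lt i.2, pow_zero] at this
        simpa using this
      have h3 : x 0 ∈ Set.range (algebraMap F K) := by
        rw [IsGalois.mem_range_algebraMap_iff_fixed]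
        intro g
        have hst : τ ∈ MulAction.stabilizer (K ≃ₐ[F] K) (x 0) := h1.symm
        exact (Subgroup.zpowers_le.mpr hst) (hτ g)
      obtain ⟨c, hc⟩ := h3
      exact ⟨c, funext fun i => by rw [h2 i, hc]⟩
    · rintro ⟨c, rfl⟩
      funext i
      simp [cycShift]
end
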